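/- Let c ∈ (0,∞). Then the contour line L_c = {(r,z) ∈ [0,∞)×ℝ : (r,z) ∈ D, V(r,z) = c} is nonempty, and there exist a compact interval [z₁,z₂] with [0,L] ⊆ [z₁,z₂) and a function r_c ∈ C([z₁,z₂]; [0,∞)) such that r_c is real-analytic and strictly positive on (z₁,z₂), r_c(z₁) = r_c(z₂) = 0 and L_c ∪ {(0,z₁)} = {(r_c(z), z) : z ∈ [z₁,z₂]}. Moreover: (ii) if c < V(0,0), then z₁ < 0 and (0,z₁) ∈ L_c; (iii) if c > V(0,0), then z₁ = 0 and the curve z ↦ (r_c(z), z) approaches (0,0) tangentially along the z-axis as z → 0+ (i.e. r_c(z)/z → 0 as z → 0+, so the level surface Γ_c has a cusp towards the origin and closure Γ_c = Γ_c ∪ {(0,0,0)}). -/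

import Mathlib

open MeasureTheory Filter Topology Set intervalIntegral

noncomputable section

/-- The potential of a thin rod `{(0,0,ζ) : 0 ≤ ζ ≤ L}` with mass density `ρ`,
in cylindrical coordinates `(r, z)`:
`V(r,z) = ∫_0^L ρ(ζ)/√((ζ-z)² + r²) dζ`. -/
def rodV (L : ℝ) (ρ : ℝ → ℝ) (r z : ℝ) : ℝ :=
  ∫ ζ in (0:ℝ)..L, ρ ζ / Real.sqrt ((ζ - z) ^ 2 + r ^ 2)

end

/-- The rod potential as a function on `ℝ³`. -/
noncomputable def rodV3 (L : ℝ) (ρ : ℝ → ℝ) (x : EuclideanSpace ℝ (Fin 3)) : ℝ :=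
  rodV L ρ (Real.sqrt ((x 0) ^ 2 + (x 1) ^ 2)) (x 2)

/-- The complement of the rod in `ℝ³`. -/
def rodCompl (L : ℝ) : Set (EuclideanSpace ℝ (Fin 3)) :=
  {x | ¬ (x 0 = 0 ∧ x 1 = 0 ∧ x 2 ∈ Icc 0 L)}

/-- The level surface `Γ_c ⊆ D ⊆ ℝ³` of the rod potential. -/
def rodLevelSurface (L : ℝ) (ρ : ℝ → ℝ) (c : ℝ) : Set (EuclideanSpace ℝ (Fin 3)) :=
  {x ∈ rodCompl L | rodV3 L ρ x = c}

/-- The contour line `L_c = {(r,z) ∈ [0,∞) × ℝ : (r,z) ∈ D, V(r,z) = c}` of the rod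
potential in the `(r,z)` half-plane. -/
def rodContour (L : ℝ) (ρ : ℝ → ℝ) (c : ℝ) : Set (ℝ × ℝ) :=
  {p | 0 ≤ p.1 ∧ (0 < p.1 ∨ p.2 < 0 ∨ L < p.2) ∧ rodV L ρ p.1 p.2 = c}

/-!
On functions `f ∈ C([0, L])`, the map `f ↦ 1 / √f` is analytic where `f > 0`: the square root is the
local inverse of squaring, whose derivative `2√f` is invertible. Composed with the polynomial family
of squared distances and with the bounded functional `g ↦ ∫ ρ g`, it shows that `V` is analytic off
the rod. Since `V` decreases strictly in `r`, is infinite on `(0, L]` and vanishes at infinity, the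
contour is the graph of the generalized inverse `r_c(z) = sup {r > 0 | c < V(r, z)}`, which is
analytic where it is positive by the implicit function theorem.

The integrability of `ρ(ζ) / ζ` is the domination that makes `V` continuous at the tip of the rod
from within each region `ε z ≤ r`. If `V(0, 0) < c`, then `V < c` on each ray `r = ε z` close to the
tip, so that `r_c(z) < ε z` there: this is the cusp.
-/

section ContinuousMap

variable {K : Type*} [TopologicalSpace K]

/-- The pointwise square root of a continuous real function (zero where the function is
negative). -/
noncomputable def sqrtMap (f : C(K, ℝ)) : C(K, ℝ) := ⟨fun k => √(f k), by fun_prop⟩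

theorem isUnit_sqrtMap {f : C(K, ℝ)} (hf : ∀ k, 0 < f k) : IsUnit (sqrtMap f) :=
  (ContinuousMap.isUnit_iff_forall_ne_zero _).2 fun k => (Real.sqrt_pos.2 (hf k)).ne'

theorem inverse_sqrtMap_apply {f : C(K, ℝ)} (hf : ∀ k, 0 < f k) (k : K) :
    Ring.inverse (sqrtMap f) k = (√(f k))⁻¹ :=
  eq_inv_of_mul_eq_one_left
    (DFunLike.congr_fun (Ring.inverse_mul_cancel _ (isUnit_sqrtMap hf)) k)

variable [CompactSpace K]

theorem isOpen_setOf_forall_pos : IsOpen {f : C(K, ℝ) | ∀ k, 0 < f k} := by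
  simpa only [mapsTo_univ_iff, mem_Ioi] using
    ContinuousMap.isOpen_setOfPred_mapsTo (X := K) isCompact_univ (isOpen_Ioi (a := (0 : ℝ)))

/-- Squaring as a homeomorphism of the positive cone of `C(K, ℝ)`, with inverse `sqrtMap`: the
analogue for functions of `Real.sqPartialHomeomorph`. -/
noncomputable def sqMapPartialHomeomorph (K : Type*) [TopologicalSpace K] [CompactSpace K] :
    OpenPartialHomeomorph C(K, ℝ) C(K, ℝ) where
  toFun f := f ^ 2
  invFun := sqrtMap
  source := {f | ∀ k, 0 < f k}
  target := {f | ∀ k, 0 < f k}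
  map_source' _ hf k := pow_pos (hf k) 2
  map_target' _ hf k := Real.sqrt_pos.2 (hf k)
  left_inv' _ hf := ContinuousMap.ext fun k => by
    simpa only [sqrtMap, ContinuousMap.coe_mk, ContinuousMap.pow_apply] using Real.sqrt_sq (hf k).le
  right_inv' f hf := ContinuousMap.ext fun k => (Real.sq_sqrt (hf k).le : √(f k) ^ 2 = f k)
  open_source := isOpen_setOf_forall_pos
  open_target := isOpen_setOf_forall_pos
  continuousOn_toFun := (continuous_pow 2).continuousOn
  continuousOn_invFun :=
    (ContinuousMap.continuous_postcomp ⟨Real.sqrt, Real.continuous_sqrt⟩).continuousOn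

theorem analyticAt_sqrtMap {f : C(K, ℝ)} (hf : ∀ k, 0 < f k) : AnalyticAt ℝ sqrtMap f := by
  have hunit : IsUnit (2 • sqrtMap f) := (ContinuousMap.isUnit_iff_forall_ne_zero _).2 fun k =>
    smul_ne_zero two_ne_zero (Real.sqrt_pos.2 (hf k)).ne'
  let hequiv : C(K, ℝ) ≃L[ℝ] C(K, ℝ) := ContinuousLinearEquiv.smulLeft hunit.unit
  have hderiv : HasFDerivAt (fun g : C(K, ℝ) => g ^ 2) (hequiv : C(K, ℝ) →L[ℝ] C(K, ℝ))
      (sqrtMap f) := by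
    refine ((hasFDerivAt_id (𝕜 := ℝ) (sqrtMap f)).pow 2).congr_fderiv ?_
    ext g k
    change _ = ((2 • sqrtMap f) * g) k
    simp
  exact (sqMapPartialHomeomorph K).analyticAt_symm hf (analyticAt_id.pow 2) hderiv.fderiv

theorem analyticAt_inverse_sqrtMap {f : C(K, ℝ)} (hf : ∀ k, 0 < f k) :
    AnalyticAt ℝ (fun g : C(K, ℝ) => Ring.inverse (sqrtMap g)) f :=
  AnalyticAt.comp (analyticOnNhd_inverse _ (isUnit_sqrtMap hf)) (analyticAt_sqrtMap hf)

variable [MeasurableSpace K] [OpensMeasurableSpace K] {μ : Measure K} {w : K → ℝ}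

theorem integrable_mul_continuousMap (hw : Integrable w μ) (f : C(K, ℝ)) :
    Integrable (fun k => w k * f k) μ :=
  hw.mul_bdd f.continuous.aestronglyMeasurable (ae_of_all _ f.norm_coe_le_norm)

/-- Integration against an integrable weight, as a continuous linear functional on `C(K, ℝ)`. -/
noncomputable def integralMulCLM (hw : Integrable w μ) : C(K, ℝ) →L[ℝ] ℝ :=
  LinearMap.mkContinuous
    { toFun := fun f => ∫ k, w k * f k ∂μ
      map_add' := fun f g => by
        simp only [ContinuousMap.add_apply, mul_add]
        exact integral_add (integrable_mul_continuousMap hw f) (integrable_mul_continuousMap hw g)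
      map_smul' := fun a f => by
        simp only [ContinuousMap.smul_apply, smul_eq_mul, mul_left_comm _ a, RingHom.id_apply]
        exact MeasureTheory.integral_const_mul a _ }
    (∫ k, ‖w k‖ ∂μ) fun f => by
      change ‖∫ k, w k * f k ∂μ‖ ≤ _
      rw [← MeasureTheory.integral_mul_const]
      refine norm_integral_le_of_norm_le (hw.norm.mul_const _) (ae_of_all _ fun k => ?_)
      rw [norm_mul]
      gcongr
      exact f.norm_coe_le_norm k

theorem integralMulCLM_apply (hw : Integrable w μ) (f : C(K, ℝ)) :
    integralMulCLM hw f = ∫ k, w k * f k ∂μ :=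
  rfl

theorem hasDerivAt_integral_mul_continuousMap (hw : Integrable w μ) {F : ℝ → C(K, ℝ)}
    {F' : K → ℝ} {t : ℝ} (hF : DifferentiableAt ℝ F t)
    (hF' : ∀ k, HasDerivAt (fun s => F s k) (F' k) t) :
    HasDerivAt (fun s => ∫ k, w k * F s k ∂μ) (∫ k, w k * F' k ∂μ) t := by
  have heval : ∀ k, deriv F t k = F' k := fun k =>
    HasDerivAt.unique (f := fun s => F s k)
      ((ContinuousMap.evalCLM (M := ℝ) ℝ k).hasFDerivAt.comp_hasDerivAt t hF.hasDerivAt) (hF' k)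
  simpa only [integralMulCLM_apply, heval] using!
    (integralMulCLM hw).hasFDerivAt.comp_hasDerivAt t hF.hasDerivAt

end ContinuousMap

theorem exists_analyticAt_implicitFunction {𝕜 E : Type*} [RCLike 𝕜] [NormedAddCommGroup E]
    [NormedSpace 𝕜 E] [CompleteSpace E] {f : E × 𝕜 → 𝕜} {x : E} {y d : 𝕜}
    (hf : AnalyticAt 𝕜 f (x, y)) (hd : HasDerivAt (fun t => f (x, t)) d y) (hd₀ : d ≠ 0) :
    ∃ φ : E → 𝕜, AnalyticAt 𝕜 φ x ∧ φ x = y ∧ ∀ᶠ t in 𝓝 x, f (t, φ t) = f (x, y) := by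
  have hcd : ContDiffAt 𝕜 ⊤ f (x, y) := hf.contDiffAt
  have hpartial : fderiv 𝕜 f (x, y) ∘L .inr 𝕜 E 𝕜 =
      (ContinuousLinearEquiv.unitsEquivAut 𝕜 (Units.mk0 d hd₀) : 𝕜 →L[𝕜] 𝕜) :=
    (hf.differentiableAt.hasFDerivAt.comp y (hasFDerivAt_prodMk_right x y)).unique
      (hd.hasFDerivAt_equiv hd₀)
  have hinv : (fderiv 𝕜 f (x, y) ∘L .inr 𝕜 E 𝕜).IsInvertible := ⟨_, hpartial.symm⟩
  exact ⟨hcd.implicitFunction (by simp) hinv,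
    (hcd.contDiffAt_implicitFunction (by simp) hinv).analyticAt,
    hcd.implicitFunction_apply_self (by simp) hinv,
    hcd.eventually_apply_implicitFunction (by simp) hinv⟩

section Exterior

variable {L : ℝ} {ρ : ℝ → ℝ} {r z : ℝ}

/-- The complement of the rod in the plane of the cylindrical coordinates `(r, z)`; negative `r`
are allowed, so that this is an open set on which the potential is analytic. -/
def rodExterior (L : ℝ) : Set (ℝ × ℝ) := {p | p.1 ≠ 0 ∨ p.2 ∉ Icc 0 L}

theorem isOpen_rodExterior : IsOpen (rodExterior L) :=
  (isOpen_compl_singleton.preimage continuous_fst).union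
    (isClosed_Icc.isOpen_compl.preimage continuous_snd)

theorem sq_sub_add_sq_pos {s : Set ℝ} {ζ : ℝ} (h : r ≠ 0 ∨ z ∉ s) (hζ : ζ ∈ s) :
    0 < (ζ - z) ^ 2 + r ^ 2 := by
  rcases h with hr | hz
  · positivity
  · have : ζ - z ≠ 0 := sub_ne_zero.2 fun h => hz (h ▸ hζ)
    positivity

/-- The squared distance from a point of the `(r, z)`-plane to a point of the rod, as a
continuous function of the latter. -/
def rodDistSq (L : ℝ) (p : ℝ × ℝ) : C(Icc 0 L, ℝ) :=
  ⟨fun ζ => (ζ - p.2) ^ 2 + p.1 ^ 2, by fun_prop⟩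

theorem analyticAt_rodDistSq (p : ℝ × ℝ) : AnalyticAt ℝ (rodDistSq L) p := by
  have hpoly : rodDistSq L = fun p => (⟨Subtype.val, continuous_subtype_val⟩ -
      p.2 • (1 : C(Icc 0 L, ℝ))) ^ 2 + (p.1 • (1 : C(Icc 0 L, ℝ))) ^ 2 := by
    ext p ζ
    simp [rodDistSq]
  rw [hpoly]
  have hfst : AnalyticAt ℝ Prod.fst p := analyticAt_fst
  have hsnd : AnalyticAt ℝ Prod.snd p := analyticAt_snd
  exact ((analyticAt_const.sub (hsnd.smul analyticAt_const)).pow 2).add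
    ((hfst.smul analyticAt_const).pow 2)

theorem rodDistSq_pos {p : ℝ × ℝ} (hp : p ∈ rodExterior L) (ζ : Icc 0 L) :
    0 < rodDistSq L p ζ :=
  sq_sub_add_sq_pos hp ζ.2

attribute [local instance] Measure.Subtype.measureSpace

theorem intervalIntegral_eq_integral_Icc (hL : 0 ≤ L) (f : ℝ → ℝ) :
    ∫ ζ in (0 : ℝ)..L, f ζ = ∫ ζ : Icc 0 L, f ζ := by
  rw [integral_of_le hL, ← integral_Icc_eq_integral_Ioc, ← integral_subtype measurableSet_Icc]

theorem integrable_subtype_Icc (hL : 0 ≤ L) (hρ : IntervalIntegrable ρ volume 0 L) :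
    Integrable fun ζ : Icc 0 L => ρ ζ := by
  have : IntegrableOn ρ (Icc 0 L) := by
    rwa [integrableOn_Icc_iff_integrableOn_Ioc, ← intervalIntegrable_iff_integrableOn_Ioc_of_le hL]
  exact (integrableOn_iff_comap_subtypeVal measurableSet_Icc).1 this

theorem rodV_eq_integral_inverse_sqrtMap (hL : 0 ≤ L) {p : ℝ × ℝ} (hp : p ∈ rodExterior L) :
    rodV L ρ p.1 p.2 = ∫ ζ : Icc 0 L, ρ ζ * Ring.inverse (sqrtMap (rodDistSq L p)) ζ := by
  simp only [inverse_sqrtMap_apply (rodDistSq_pos hp), ← div_eq_mul_inv]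
  exact intervalIntegral_eq_integral_Icc hL _

theorem analyticAt_inverse_sqrtMap_rodDistSq {p : ℝ × ℝ} (hp : p ∈ rodExterior L) :
    AnalyticAt ℝ (fun q => Ring.inverse (sqrtMap (rodDistSq L q))) p :=
  (analyticAt_inverse_sqrtMap (rodDistSq_pos hp)).comp (analyticAt_rodDistSq p)

theorem analyticAt_rodV (hL : 0 ≤ L) (hρ : IntervalIntegrable ρ volume 0 L) {p : ℝ × ℝ}
    (hp : p ∈ rodExterior L) : AnalyticAt ℝ (fun q => rodV L ρ q.1 q.2) p := by
  refine (((integralMulCLM (integrable_subtype_Icc hL hρ)).analyticAt _).comp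
    (analyticAt_inverse_sqrtMap_rodDistSq hp)).congr ?_
  filter_upwards [isOpen_rodExterior.mem_nhds hp] with q hq
  exact (rodV_eq_integral_inverse_sqrtMap hL hq).symm

theorem hasDerivAt_inv_sqrt_add_sq {a t : ℝ} (h : 0 < a + t ^ 2) :
    HasDerivAt (fun s => (√(a + s ^ 2))⁻¹) (-(t / √(a + t ^ 2) ^ 3)) t := by
  have hsqrt : √(a + t ^ 2) ≠ 0 := (Real.sqrt_pos.2 h).ne'
  have hsq : HasDerivAt (fun s => a + s ^ 2) (2 * t) t := by
    simpa using (hasDerivAt_pow 2 t).const_add a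
  refine ((hsq.sqrt h.ne').fun_inv hsqrt).congr_deriv ?_
  field_simp

theorem hasDerivAt_rodV_radial (hL : 0 ≤ L) (hρ : IntervalIntegrable ρ volume 0 L)
    (h : (r, z) ∈ rodExterior L) :
    HasDerivAt (fun s => rodV L ρ s z)
      (-∫ ζ in (0 : ℝ)..L, ρ ζ * (r / √((ζ - z) ^ 2 + r ^ 2) ^ 3)) r := by
  have hline : DifferentiableAt ℝ (fun s : ℝ => (s, z)) r := by fun_prop
  have hpoint : ∀ ζ : Icc 0 L, HasDerivAt
      (fun s => Ring.inverse (sqrtMap (rodDistSq L (s, z))) ζ)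
      (-(r / √((ζ - z) ^ 2 + r ^ 2) ^ 3)) r := fun ζ => by
    refine (hasDerivAt_inv_sqrt_add_sq (rodDistSq_pos h ζ)).congr_of_eventuallyEq ?_
    filter_upwards [hline.continuousAt.eventually (isOpen_rodExterior.mem_nhds h)] with s hs
    exact inverse_sqrtMap_apply (rodDistSq_pos hs) ζ
  have hdiff : DifferentiableAt ℝ (fun s => Ring.inverse (sqrtMap (rodDistSq L (s, z)))) r :=
    DifferentiableAt.comp (x := r) (f := fun s => (s, z))
      (analyticAt_inverse_sqrtMap_rodDistSq h).differentiableAt hline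
  have hderiv := hasDerivAt_integral_mul_continuousMap (integrable_subtype_Icc hL hρ) hdiff hpoint
  simp only [mul_neg, MeasureTheory.integral_neg] at hderiv
  rw [intervalIntegral_eq_integral_Icc hL]
  refine hderiv.congr_of_eventuallyEq ?_
  filter_upwards [hline.continuousAt.eventually (isOpen_rodExterior.mem_nhds h)] with s hs
  exact rodV_eq_integral_inverse_sqrtMap (p := (s, z)) hL hs

theorem intervalIntegrable_rodV (hL : 0 ≤ L) (hρ : IntervalIntegrable ρ volume 0 L)
    (h : (r, z) ∈ rodExterior L) :
    IntervalIntegrable (fun ζ => ρ ζ / √((ζ - z) ^ 2 + r ^ 2)) volume 0 L := by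
  simp only [div_eq_mul_inv]
  refine hρ.mul_continuousOn (ContinuousOn.inv₀ (by fun_prop) fun ζ hζ => ?_)
  exact (Real.sqrt_pos.2 (sq_sub_add_sq_pos h (uIcc_of_le hL ▸ hζ))).ne'

end Exterior

section Decay

variable {L C : ℝ} {ρ : ℝ → ℝ}

theorem norm_sub_le_sqrt {p : ℝ × ℝ} {ζ : ℝ} (hζ : ζ ∈ Icc 0 L) :
    ‖p‖ - L ≤ √((ζ - p.2) ^ 2 + p.1 ^ 2) := by
  have hfst : ‖p.1‖ ≤ √((ζ - p.2) ^ 2 + p.1 ^ 2) := Real.abs_le_sqrt (by nlinarith)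
  have hsnd : ‖ζ - p.2‖ ≤ √((ζ - p.2) ^ 2 + p.1 ^ 2) := Real.abs_le_sqrt (by nlinarith)
  have hζnorm : ‖ζ‖ ≤ L := by rw [Real.norm_of_nonneg hζ.1]; exact hζ.2
  rw [sub_le_iff_le_add, Prod.norm_def, max_le_iff]
  constructor
  · linarith [norm_nonneg ζ]
  · linarith [norm_le_norm_add_norm_sub ζ p.2]

theorem norm_rodV_le (hL : 0 ≤ L) (hC : ∀ ζ ∈ Ioc 0 L, ‖ρ ζ‖ ≤ C) {p : ℝ × ℝ} (hp : L < ‖p‖) :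
    ‖rodV L ρ p.1 p.2‖ ≤ C / (‖p‖ - L) * L := by
  have hbound : ∀ ζ ∈ uIoc 0 L, ‖ρ ζ / √((ζ - p.2) ^ 2 + p.1 ^ 2)‖ ≤ C / (‖p‖ - L) := by
    rw [uIoc_of_le hL]
    intro ζ hζ
    rw [norm_div, Real.norm_of_nonneg (Real.sqrt_nonneg _)]
    exact div_le_div₀ ((norm_nonneg _).trans (hC ζ hζ)) (hC ζ hζ) (sub_pos.2 hp)
      (norm_sub_le_sqrt (Ioc_subset_Icc_self hζ))
  simpa only [rodV, sub_zero, abs_of_nonneg hL] using norm_integral_le_of_norm_le_const hbound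

theorem tendsto_rodV_cobounded (hL : 0 ≤ L) (hC : ∀ ζ ∈ Ioc 0 L, ‖ρ ζ‖ ≤ C) :
    Tendsto (fun p : ℝ × ℝ => rodV L ρ p.1 p.2) (Bornology.cobounded (ℝ × ℝ)) (𝓝 0) := by
  have hnorm : Tendsto (fun p : ℝ × ℝ => ‖p‖) (Bornology.cobounded (ℝ × ℝ)) atTop :=
    tendsto_norm_cobounded_atTop
  have hzero : Tendsto (fun p : ℝ × ℝ => C / (‖p‖ - L) * L) (Bornology.cobounded (ℝ × ℝ))
      (𝓝 0) := by
    simpa [sub_eq_add_neg] using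
      ((tendsto_atTop_add_const_right _ (-L) hnorm).const_div_atTop C).mul_const L
  refine squeeze_zero_norm' ?_ hzero
  filter_upwards [hnorm.eventually_gt_atTop L] with p hp
  exact norm_rodV_le hL hC hp

end Decay

section BlowUp

variable {L : ℝ} {ρ : ℝ → ℝ}

theorem integral_inv_sub_add {a b d : ℝ} (hab : a ≤ b) (hd : 0 < d) :
    ∫ ζ in a..b, ((b - ζ) + d)⁻¹ = Real.log ((b - a + d) / d) := by
  have hsub := integral_comp_sub_left (a := a) (b := b) (fun x => x⁻¹) (b + d)
  simp only [add_sub_cancel_left, add_sub_right_comm] at hsub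
  rw [hsub, integral_inv_of_pos hd (by linarith)]

theorem sqrt_sq_add_sq_le (x y : ℝ) : √(x ^ 2 + y ^ 2) ≤ |x| + |y| :=
  Real.sqrt_le_iff.2 ⟨by positivity, by
    nlinarith [sq_abs x, sq_abs y, mul_nonneg (abs_nonneg x) (abs_nonneg y)]⟩

theorem mul_log_le_rodV {a b d m r z : ℝ} (ha : 0 ≤ a) (hab : a ≤ b) (hb : b ≤ L)
    (hρ : IntervalIntegrable ρ volume 0 L) (hρ₀ : ∀ ζ ∈ Ioc 0 L, 0 ≤ ρ ζ) (hm₀ : 0 ≤ m)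
    (hm : ∀ ζ ∈ Icc a b, m ≤ ρ ζ) (hp : (r, z) ∈ rodExterior L) (hd : 0 < d)
    (hdist : |b - z| + |r| ≤ d) :
    m * Real.log ((b - a + d) / d) ≤ rodV L ρ r z := by
  have hL : 0 ≤ L := ha.trans (hab.trans hb)
  have hsub : Icc a b ⊆ Icc 0 L := Icc_subset_Icc ha hb
  have hint := intervalIntegrable_rodV hL hρ hp
  have hsqrt : ∀ ζ ∈ Icc a b, √((ζ - z) ^ 2 + r ^ 2) ≤ b - ζ + d := fun ζ hζ => by
    have habs : |ζ - z| ≤ (b - ζ) + |b - z| :=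
      abs_le.2 ⟨by linarith [neg_abs_le (b - z), hζ.2], by linarith [le_abs_self (b - z), hζ.2]⟩
    linarith [sqrt_sq_add_sq_le (ζ - z) r]
  have hcont : ContinuousOn (fun ζ => m * (b - ζ + d)⁻¹) (Icc a b) :=
    continuousOn_const.mul (ContinuousOn.inv₀ (by fun_prop) fun ζ hζ => by linarith [hζ.2])
  calc m * Real.log ((b - a + d) / d) = ∫ ζ in a..b, m * (b - ζ + d)⁻¹ := by
        rw [intervalIntegral.integral_const_mul, integral_inv_sub_add hab hd]
    _ ≤ ∫ ζ in a..b, ρ ζ / √((ζ - z) ^ 2 + r ^ 2) := by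
        refine integral_mono_on hab (hcont.intervalIntegrable_of_Icc hab)
          (hint.mono_set (by rwa [uIcc_of_le hab, uIcc_of_le hL])) fun ζ hζ => ?_
        exact div_le_div₀ (hm₀.trans (hm ζ hζ)) (hm ζ hζ)
          (Real.sqrt_pos.2 (sq_sub_add_sq_pos hp (hsub hζ))) (hsqrt ζ hζ)
    _ ≤ rodV L ρ r z := by
        refine integral_mono_interval ha hab hb ?_ hint
        filter_upwards [ae_restrict_mem measurableSet_Ioc] with ζ hζ
        exact div_nonneg (hρ₀ ζ hζ) (Real.sqrt_nonneg _)

theorem tendsto_log_add_div_atTop {a : ℝ} (ha : 0 < a) :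
    Tendsto (fun d => Real.log ((a + d) / d)) (𝓝[>] 0) atTop := by
  have hnum : Tendsto (fun d : ℝ => a + d) (𝓝[>] 0) (𝓝 a) := by
    simpa using (tendsto_const_nhds.add tendsto_id).mono_left (nhdsWithin_le_nhds (a := (0 : ℝ)))
  exact Real.tendsto_log_atTop.comp (hnum.pos_mul_atTop ha tendsto_inv_nhdsGT_zero)

theorem tendsto_rodV_atTop (hρc : ContinuousOn ρ (Icc 0 L)) (hρ : ∀ ζ ∈ Ioc 0 L, 0 < ρ ζ)
    {z₀ : ℝ} (hz₀ : z₀ ∈ Ioc 0 L) :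
    Tendsto (fun p : ℝ × ℝ => rodV L ρ p.1 p.2) (𝓝[rodExterior L] (0, z₀)) atTop := by
  obtain ⟨hz₀_pos, hz₀L⟩ := hz₀
  have hhalf : z₀ / 2 ≤ z₀ := by linarith
  obtain ⟨x, hx, hxmin⟩ := isCompact_Icc.exists_isMinOn (nonempty_Icc.2 hhalf)
    (hρc.mono (Icc_subset_Icc (by linarith) hz₀L))
  have hρx : 0 < ρ x := hρ x ⟨by linarith [hx.1], hx.2.trans hz₀L⟩
  let d : ℝ × ℝ → ℝ := fun p => |z₀ - p.2| + |p.1|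
  have hdist_pos : ∀ p ∈ rodExterior L, 0 < d p := by
    rintro p (hp | hp)
    · positivity
    · have : z₀ - p.2 ≠ 0 := sub_ne_zero.2 fun h => hp (h ▸ ⟨hz₀_pos.le, hz₀L⟩)
      positivity
  have hdist : Tendsto d (𝓝[rodExterior L] (0, z₀)) (𝓝[>] 0) := by
    refine tendsto_nhdsWithin_iff.2 ⟨?_, eventually_mem_nhdsWithin.mono hdist_pos⟩
    have hcont : Continuous d := by fun_prop
    simpa [d] using (hcont.tendsto (0, z₀)).mono_left nhdsWithin_le_nhds
  have hlog := (tendsto_log_add_div_atTop (a := z₀ - z₀ / 2) (by linarith)).comp hdist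
  refine tendsto_atTop_mono' _ ?_ (hlog.const_mul_atTop hρx)
  filter_upwards [self_mem_nhdsWithin] with p hp
  exact mul_log_le_rodV (by linarith) hhalf hz₀L
    (hρc.intervalIntegrable_of_Icc (hz₀_pos.le.trans hz₀L)) (fun ζ hζ => (hρ ζ hζ).le) hρx.le
    (fun ζ hζ => hxmin hζ) hp (hdist_pos p hp) le_rfl

end BlowUp

/-- A rod of positive length whose continuous mass density is positive except possibly at the tip
`0`, where it vanishes fast enough to make the potential finite. -/
structure IsCriticalRod (L : ℝ) (ρ : ℝ → ℝ) : Prop where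
  length_pos : 0 < L
  continuousOn : ContinuousOn ρ (Icc 0 L)
  pos : ∀ ζ ∈ Ioc 0 L, 0 < ρ ζ
  intervalIntegrable_div : IntervalIntegrable (fun ζ => ρ ζ / ζ) volume 0 L

theorem sq_mul_sq_le_of_mul_le {ε r z ζ : ℝ} (hε : 0 < ε) (hζ : 0 ≤ ζ) (h : ε * z ≤ r) :
    ε ^ 2 * ζ ^ 2 ≤ (1 + ε ^ 2) * ((ζ - z) ^ 2 + r ^ 2) := by
  rcases le_total z 0 with hz | hz
  · have : ζ ^ 2 ≤ (ζ - z) ^ 2 := by nlinarith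
    nlinarith [sq_nonneg ε, sq_nonneg r, sq_nonneg ζ, mul_nonneg (sq_nonneg ε) (sq_nonneg r)]
  · have hr : (ε * z) ^ 2 ≤ r ^ 2 := pow_le_pow_left₀ (by positivity) h 2
    nlinarith [sq_nonneg (ζ - (1 + ε ^ 2) * z), mul_nonneg (sq_nonneg ε) (sub_nonneg.2 hr)]

namespace IsCriticalRod

variable {L : ℝ} {ρ : ℝ → ℝ} {r r' z z' : ℝ}

theorem intervalIntegrable (h : IsCriticalRod L ρ) : IntervalIntegrable ρ volume 0 L :=
  h.continuousOn.intervalIntegrable_of_Icc h.length_pos.le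

theorem analyticAt_rodV (h : IsCriticalRod L ρ) {p : ℝ × ℝ} (hp : p ∈ rodExterior L) :
    AnalyticAt ℝ (fun q => rodV L ρ q.1 q.2) p :=
  _root_.analyticAt_rodV h.length_pos.le h.intervalIntegrable hp

theorem intervalIntegrable_rodV (h : IsCriticalRod L ρ) (hrz : r ≠ 0 ∨ z ∉ Ioc 0 L) :
    IntervalIntegrable (fun ζ => ρ ζ / √((ζ - z) ^ 2 + r ^ 2)) volume 0 L := by
  by_cases hext : (r, z) ∈ rodExterior L
  · exact _root_.intervalIntegrable_rodV h.length_pos.le h.intervalIntegrable hext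
  · obtain ⟨hr, hz⟩ : r = 0 ∧ z ∈ Icc 0 L := by
      simpa only [rodExterior, mem_ofPred_eq, not_or, not_not] using hext
    have hz₀ : z = 0 := by
      by_contra hne
      exact hrz.elim (· hr) (· ⟨hz.1.lt_of_ne' hne, hz.2⟩)
    refine h.intervalIntegrable_div.congr fun ζ hζ => ?_
    rw [uIoc_of_le h.length_pos.le] at hζ
    simp [hr, hz₀, Real.sqrt_sq hζ.1.le]

theorem rodV_lt_rodV (h : IsCriticalRod L ρ) (hrz : r ≠ 0 ∨ z ∉ Ioc 0 L)
    (hrz' : r' ≠ 0 ∨ z' ∉ Ioc 0 L)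
    (hlt : ∀ ζ ∈ Ioo 0 L, (ζ - z) ^ 2 + r ^ 2 < (ζ - z') ^ 2 + r' ^ 2) :
    rodV L ρ r' z' < rodV L ρ r z := by
  rw [← sub_pos, rodV, rodV,
    ← integral_sub (h.intervalIntegrable_rodV hrz) (h.intervalIntegrable_rodV hrz')]
  refine intervalIntegral_pos_of_pos_on
    ((h.intervalIntegrable_rodV hrz).sub (h.intervalIntegrable_rodV hrz'))
    (fun ζ hζ => ?_) h.length_pos
  have hζ' := Ioo_subset_Ioc_self hζ
  have hpos := sq_sub_add_sq_pos hrz hζ'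
  exact sub_pos.2 (div_lt_div_of_pos_left (h.pos ζ hζ') (Real.sqrt_pos.2 hpos)
    (Real.sqrt_lt_sqrt hpos.le (hlt ζ hζ)))

theorem rodV_lt_of_lt (h : IsCriticalRod L ρ) (hrz : r ≠ 0 ∨ z ∉ Ioc 0 L) (hr : 0 ≤ r)
    (hlt : r < r') : rodV L ρ r' z < rodV L ρ r z :=
  h.rodV_lt_rodV hrz (Or.inl (hr.trans_lt hlt).ne') fun _ _ => by gcongr

theorem strictMonoOn_rodV_axis (h : IsCriticalRod L ρ) : StrictMonoOn (rodV L ρ 0) (Iic 0) :=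
  fun _ hz _ hz' hlt => h.rodV_lt_rodV (Or.inr (notMem_Ioc_of_le hz'))
    (Or.inr (notMem_Ioc_of_le hz)) fun ζ hζ => by nlinarith [hζ.1, mem_Iic.1 hz']

theorem strictAntiOn_rodV_axis (h : IsCriticalRod L ρ) : StrictAntiOn (rodV L ρ 0) (Ioi L) :=
  fun _ hz _ hz' hlt => h.rodV_lt_rodV (Or.inr (notMem_Ioc_of_gt hz))
    (Or.inr (notMem_Ioc_of_gt hz')) fun ζ hζ => by nlinarith [hζ.2, mem_Ioi.1 hz]

theorem deriv_radial_neg (h : IsCriticalRod L ρ) (hr : 0 < r) (z : ℝ) :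
    -∫ ζ in (0 : ℝ)..L, ρ ζ * (r / √((ζ - z) ^ 2 + r ^ 2) ^ 3) < 0 := by
  have hdist : ∀ ζ, 0 < √((ζ - z) ^ 2 + r ^ 2) := fun ζ => Real.sqrt_pos.2 (by positivity)
  refine neg_lt_zero.2 (intervalIntegral_pos_of_pos_on ?_ (fun ζ hζ => ?_) h.length_pos)
  · refine (h.continuousOn.mul (Continuous.continuousOn ?_)).intervalIntegrable_of_Icc
      h.length_pos.le
    exact continuous_const.div (by fun_prop) fun ζ => (pow_pos (hdist ζ) 3).ne'
  · exact mul_pos (h.pos ζ (Ioo_subset_Ioc_self hζ)) (div_pos hr (pow_pos (hdist ζ) 3))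

theorem tendsto_rodV_cobounded (h : IsCriticalRod L ρ) :
    Tendsto (fun p : ℝ × ℝ => rodV L ρ p.1 p.2) (Bornology.cobounded (ℝ × ℝ)) (𝓝 0) := by
  obtain ⟨C, hC⟩ := isCompact_Icc.exists_bound_of_continuousOn h.continuousOn
  exact _root_.tendsto_rodV_cobounded h.length_pos.le fun ζ hζ => hC ζ (Ioc_subset_Icc_self hζ)

theorem continuousWithinAt_rodV_tip (h : IsCriticalRod L ρ) {ε : ℝ} (hε : 0 < ε) :
    ContinuousWithinAt (fun p : ℝ × ℝ => rodV L ρ p.1 p.2) {p | ε * p.2 ≤ p.1} (0, 0) := by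
  have hL := h.length_pos.le
  refine intervalIntegral.continuousWithinAt_of_dominated_interval
    (bound := fun ζ => ‖ρ ζ / ζ‖ * (√(1 + ε ^ 2) / ε)) (.of_forall fun p => ?_) ?_
    (h.intervalIntegrable_div.norm.mul_const _) (.of_forall fun ζ hζ => ?_)
  · rw [uIoc_of_le hL]
    exact h.intervalIntegrable.1.aestronglyMeasurable.mul
      (by fun_prop : Measurable fun ζ => (√((ζ - p.2) ^ 2 + p.1 ^ 2))⁻¹).aestronglyMeasurable
  · filter_upwards [self_mem_nhdsWithin] with p hp
    refine .of_forall fun ζ hζ => ?_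
    rw [uIoc_of_le hL] at hζ
    have hcone : ε * ζ ≤ √(1 + ε ^ 2) * √((ζ - p.2) ^ 2 + p.1 ^ 2) := by
      rw [← Real.sqrt_mul (by positivity)]
      refine Real.le_sqrt_of_sq_le ?_
      rw [mul_pow]
      exact sq_mul_sq_le_of_mul_le hε hζ.1.le hp
    have hdist : 0 < √((ζ - p.2) ^ 2 + p.1 ^ 2) :=
      pos_of_mul_pos_right ((mul_pos hε hζ.1).trans_le hcone) (Real.sqrt_nonneg _)
    rw [norm_div, norm_div, Real.norm_of_nonneg (Real.sqrt_nonneg _), Real.norm_of_nonneg hζ.1.le,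
      div_mul_div_comm, div_le_div_iff₀ hdist (mul_pos hζ.1 hε)]
    linarith [mul_le_mul_of_nonneg_left hcone (norm_nonneg (ρ ζ))]
  · rw [uIoc_of_le hL] at hζ
    have hne : √((ζ - (0 : ℝ × ℝ).2) ^ 2 + (0 : ℝ × ℝ).1 ^ 2) ≠ 0 := by
      have := hζ.1
      simpa [Real.sqrt_sq this.le] using this.ne'
    exact ContinuousAt.continuousWithinAt (by fun_prop (disch := exact hne))

end IsCriticalRod

section GeneralizedInverse

variable {α : Type*} [LinearOrder α] [TopologicalSpace α] [OrderTopology α] {f : ℝ → α} {a : ℝ}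
  {c : α}

theorem lt_sSup_setOf_lt_apply_iff (hf : AntitoneOn f (Ioi 0)) (hfc : ContinuousOn f (Ioi 0))
    (hbdd : BddAbove {r | 0 < r ∧ c < f r}) (ha : 0 < a) :
    a < sSup {r | 0 < r ∧ c < f r} ↔ c < f a := by
  refine ⟨fun hlt => ?_, fun hlt => ?_⟩
  · have hne : {r | 0 < r ∧ c < f r}.Nonempty := by
      by_contra hempty
      rw [not_nonempty_iff_eq_empty.1 hempty, Real.sSup_empty] at hlt
      exact ha.not_gt hlt
    obtain ⟨r, ⟨hr, hcr⟩, har⟩ := exists_lt_of_lt_csSup hne hlt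
    exact hcr.trans_le (hf ha hr har.le)
  · obtain ⟨r, hcr, har⟩ := (((hfc.continuousAt (Ioi_mem_nhds ha)).eventually
      (lt_mem_nhds hlt)).filter_mono nhdsWithin_le_nhds |>.and
      (self_mem_nhdsWithin (s := Ioi a))).exists
    exact (mem_Ioi.1 har).trans_le (le_csSup hbdd ⟨ha.trans har, hcr⟩)

theorem sSup_setOf_lt_apply_lt_iff (hf : StrictAntiOn f (Ioi 0)) (hfc : ContinuousOn f (Ioi 0))
    (hbdd : BddAbove {r | 0 < r ∧ c < f r}) (ha : 0 < a) :
    sSup {r | 0 < r ∧ c < f r} < a ↔ f a < c := by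
  have hlt_iff : ∀ b, 0 < b → (b < sSup {r | 0 < r ∧ c < f r} ↔ c < f b) := fun b =>
    lt_sSup_setOf_lt_apply_iff hf.antitoneOn hfc hbdd
  refine ⟨fun hlt => ?_, fun hlt => ?_⟩
  · obtain ⟨b, hb, hba⟩ := exists_between (max_lt hlt ha)
    obtain ⟨hSb, hb₀⟩ := max_lt_iff.1 hb
    exact (hf hb₀ ha hba).trans_le (not_lt.1 (mt (hlt_iff b hb₀).2 hSb.not_gt))
  · obtain ⟨b, hbc, hb₀, hba⟩ := (((hfc.continuousAt (Ioi_mem_nhds ha)).eventually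
      (gt_mem_nhds hlt)).filter_mono nhdsWithin_le_nhds |>.and (Ioo_mem_nhdsLT ha)).exists
    exact (not_lt.1 (mt (hlt_iff b hb₀).1 hbc.not_gt)).trans_lt hba

end GeneralizedInverse

/-- The radius at which the contour line `V = c` crosses height `z`. As `sSup ∅ = 0`, it is `0`
where the potential nowhere exceeds `c`. -/
noncomputable def rodContourRadius (L : ℝ) (ρ : ℝ → ℝ) (c z : ℝ) : ℝ :=
  sSup {r | 0 < r ∧ c < rodV L ρ r z}

theorem rodContourRadius_nonneg (L : ℝ) (ρ : ℝ → ℝ) (c z : ℝ) : 0 ≤ rodContourRadius L ρ c z :=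
  Real.sSup_nonneg fun _ hr => hr.1.le

namespace IsCriticalRod

variable {L : ℝ} {ρ : ℝ → ℝ} {a c r z : ℝ}

theorem continuousAt_rodV_height (h : IsCriticalRod L ρ) (hrz : (r, z) ∈ rodExterior L) :
    ContinuousAt (rodV L ρ r) z :=
  (h.analyticAt_rodV hrz).continuousAt.comp (f := fun t => (r, t)) (by fun_prop)

theorem continuousAt_rodV_radial (h : IsCriticalRod L ρ) (hrz : (r, z) ∈ rodExterior L) :
    ContinuousAt (fun s => rodV L ρ s z) r :=
  (h.analyticAt_rodV hrz).continuousAt.comp (f := fun s => (s, z)) (by fun_prop)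

theorem continuousWithinAt_rodV_radial_zero (h : IsCriticalRod L ρ) (hz : z ∉ Ioc 0 L) :
    ContinuousWithinAt (fun s => rodV L ρ s z) (Ioi 0) 0 := by
  rcases eq_or_ne z 0 with rfl | hz₀
  · exact (h.continuousWithinAt_rodV_tip one_pos).comp (f := fun s : ℝ => (s, (0 : ℝ)))
      (by fun_prop) fun s hs => by simpa using hs.out.le
  · have hzext : z ∉ Icc 0 L := fun hmem => hz ⟨hmem.1.lt_of_ne' hz₀, hmem.2⟩
    exact (h.continuousAt_rodV_radial (Or.inr hzext)).continuousWithinAt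

theorem continuousOn_rodV_axis (h : IsCriticalRod L ρ) : ContinuousOn (rodV L ρ 0) (Iic 0) := by
  intro z hz
  rcases hz.out.eq_or_lt with rfl | hneg
  · exact (h.continuousWithinAt_rodV_tip one_pos).comp (f := fun t : ℝ => ((0 : ℝ), t))
      (by fun_prop) fun t ht => by simpa using ht.out
  · exact (h.continuousAt_rodV_height (Or.inr (notMem_Icc_of_lt hneg))).continuousWithinAt

theorem rodV_zero_pos (h : IsCriticalRod L ρ) : 0 < rodV L ρ 0 0 := by
  refine intervalIntegral_pos_of_pos_on
    (h.intervalIntegrable_rodV (Or.inr (notMem_Ioc_of_le le_rfl))) (fun ζ hζ => ?_) h.length_pos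
  have := hζ.1
  exact div_pos (h.pos ζ (Ioo_subset_Ioc_self hζ)) (by positivity)

theorem tendsto_rodV_axis (h : IsCriticalRod L ρ) :
    Tendsto (rodV L ρ 0) (Bornology.cobounded ℝ) (𝓝 0) := by
  have hpath : Tendsto (fun z => ((0 : ℝ), z)) (Bornology.cobounded ℝ)
      (Bornology.cobounded (ℝ × ℝ)) :=
    tendsto_norm_atTop_iff_cobounded.1
      (tendsto_atTop_mono (fun z => norm_snd_le ((0 : ℝ), z)) tendsto_norm_cobounded_atTop)
  exact Tendsto.comp (f := fun z => ((0 : ℝ), z)) h.tendsto_rodV_cobounded hpath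

theorem exists_le_zero_rodV_axis_eq (h : IsCriticalRod L ρ) (hc : 0 < c)
    (hcV : c ≤ rodV L ρ 0 0) : ∃ z ≤ 0, rodV L ρ 0 z = c :=
  isPreconnected_Iic.intermediate_value_Ioc (mem_Iic.2 le_rfl)
    (le_principal_iff.2 (Iic_mem_atBot 0)) h.continuousOn_rodV_axis
    (h.tendsto_rodV_axis.mono_left IsOrderBornology.atBot_le_cobounded) ⟨hc, hcV⟩

theorem exists_gt_length_rodV_axis_eq (h : IsCriticalRod L ρ) (hc : 0 < c) :
    ∃ z > L, rodV L ρ 0 z = c := by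
  have hpath : Tendsto (fun z : ℝ => ((0 : ℝ), z)) (𝓝[>] L) (𝓝[rodExterior L] (0, L)) :=
    Tendsto.inf (by fun_prop : Continuous fun z : ℝ => ((0 : ℝ), z)).continuousAt
      (tendsto_principal_principal.2 fun z hz => Or.inr (notMem_Icc_of_gt hz))
  have hblowup : Tendsto (rodV L ρ 0) (𝓝[>] L) atTop :=
    Tendsto.comp (f := fun z => ((0 : ℝ), z))
      (tendsto_rodV_atTop h.continuousOn h.pos ⟨h.length_pos, le_rfl⟩) hpath
  exact isPreconnected_Ioi.intermediate_value_Ioi (le_principal_iff.2 (Ioi_mem_atTop L))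
    (le_principal_iff.2 self_mem_nhdsWithin)
    (fun z hz => (h.continuousAt_rodV_height (Or.inr (notMem_Icc_of_gt hz))).continuousWithinAt)
    (h.tendsto_rodV_axis.mono_left IsOrderBornology.atTop_le_cobounded)
    hblowup hc

theorem bddAbove_setOf_lt_rodV (h : IsCriticalRod L ρ) (hc : 0 < c) (z : ℝ) :
    BddAbove {r | 0 < r ∧ c < rodV L ρ r z} := by
  have hpath : Tendsto (fun r => (r, z)) atTop (Bornology.cobounded (ℝ × ℝ)) :=
    tendsto_norm_atTop_iff_cobounded.1
      (tendsto_atTop_mono (fun r => norm_fst_le (r, z)) tendsto_norm_atTop_atTop)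
  have hdecay : Tendsto (fun r => rodV L ρ r z) atTop (𝓝 0) :=
    Tendsto.comp (f := fun r => (r, z)) h.tendsto_rodV_cobounded hpath
  obtain ⟨R, hR⟩ := eventually_atTop.1 (hdecay.eventually_lt_const hc)
  exact ⟨R, fun r hr => le_of_not_ge fun hRr => (hR r hRr).not_gt hr.2⟩

theorem strictAntiOn_rodV_radial (h : IsCriticalRod L ρ) (z : ℝ) :
    StrictAntiOn (fun r => rodV L ρ r z) (Ioi 0) :=
  fun _ hr _ _ hlt => h.rodV_lt_of_lt (Or.inl hr.out.ne') hr.out.le hlt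

theorem continuousOn_rodV_radial (h : IsCriticalRod L ρ) (z : ℝ) :
    ContinuousOn (fun r => rodV L ρ r z) (Ioi 0) :=
  fun _ hr => (h.continuousAt_rodV_radial (Or.inl hr.out.ne')).continuousWithinAt

theorem lt_rodContourRadius_iff (h : IsCriticalRod L ρ) (hc : 0 < c) (ha : 0 < a) :
    a < rodContourRadius L ρ c z ↔ c < rodV L ρ a z :=
  lt_sSup_setOf_lt_apply_iff (h.strictAntiOn_rodV_radial z).antitoneOn
    (h.continuousOn_rodV_radial z) (h.bddAbove_setOf_lt_rodV hc z) ha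

theorem rodContourRadius_lt_iff (h : IsCriticalRod L ρ) (hc : 0 < c) (ha : 0 < a) :
    rodContourRadius L ρ c z < a ↔ rodV L ρ a z < c :=
  sSup_setOf_lt_apply_lt_iff (h.strictAntiOn_rodV_radial z) (h.continuousOn_rodV_radial z)
    (h.bddAbove_setOf_lt_rodV hc z) ha

theorem rodContourRadius_eq_iff (h : IsCriticalRod L ρ) (hc : 0 < c) (ha : 0 < a) :
    rodContourRadius L ρ c z = a ↔ rodV L ρ a z = c := by
  rw [le_antisymm_iff, ← not_lt, ← not_lt, h.lt_rodContourRadius_iff hc ha,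
    h.rodContourRadius_lt_iff hc ha, not_lt, not_lt, ← le_antisymm_iff]

theorem rodV_rodContourRadius (h : IsCriticalRod L ρ) (hc : 0 < c)
    (hpos : 0 < rodContourRadius L ρ c z) : rodV L ρ (rodContourRadius L ρ c z) z = c :=
  (h.rodContourRadius_eq_iff hc hpos).1 rfl

theorem continuous_rodContourRadius (h : IsCriticalRod L ρ) (hc : 0 < c) :
    Continuous (rodContourRadius L ρ c) := by
  refine continuous_iff_continuousAt.2 fun z => tendsto_order.2 ⟨fun b hb => ?_, fun a ha => ?_⟩
  · rcases lt_or_ge b 0 with hb₀ | hb₀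
    · exact .of_forall fun t => hb₀.trans_le (rodContourRadius_nonneg L ρ c t)
    · obtain ⟨b', hbb', hb'⟩ := exists_between hb
      have hb'₀ := hb₀.trans_lt hbb'
      filter_upwards [(h.continuousAt_rodV_height (Or.inl hb'₀.ne')).eventually
        (lt_mem_nhds ((h.lt_rodContourRadius_iff hc hb'₀).1 hb'))] with t ht
      exact hbb'.trans ((h.lt_rodContourRadius_iff hc hb'₀).2 ht)
  · have ha₀ := (rodContourRadius_nonneg L ρ c z).trans_lt ha
    filter_upwards [(h.continuousAt_rodV_height (Or.inl ha₀.ne')).eventually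
      (gt_mem_nhds ((h.rodContourRadius_lt_iff hc ha₀).1 ha))] with t ht
    exact (h.rodContourRadius_lt_iff hc ha₀).2 ht

theorem analyticAt_rodContourRadius (h : IsCriticalRod L ρ) (hc : 0 < c)
    (hpos : 0 < rodContourRadius L ρ c z) : AnalyticAt ℝ (rodContourRadius L ρ c) z := by
  have hext : (rodContourRadius L ρ c z, z) ∈ rodExterior L := Or.inl hpos.ne'
  have hswap : AnalyticAt ℝ (fun p : ℝ × ℝ => rodV L ρ p.2 p.1) (z, rodContourRadius L ρ c z) :=
    AnalyticAt.comp (f := fun p : ℝ × ℝ => (p.2, p.1)) (h.analyticAt_rodV hext)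
      (analyticAt_snd.prod analyticAt_fst)
  obtain ⟨φ, hφ, hφz, hφV⟩ := exists_analyticAt_implicitFunction hswap
    (hasDerivAt_rodV_radial h.length_pos.le h.intervalIntegrable hext)
    (h.deriv_radial_neg hpos z).ne
  refine hφ.congr ?_
  filter_upwards [hφV, hφ.continuousAt.eventually (lt_mem_nhds (hφz ▸ hpos))] with t ht hφt
  exact ((h.rodContourRadius_eq_iff hc hφt).2 (ht.trans (h.rodV_rodContourRadius hc hpos))).symm

theorem rodContourRadius_pos_iff (h : IsCriticalRod L ρ) (hc : 0 < c) (hz : z ∉ Ioc 0 L) :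
    0 < rodContourRadius L ρ c z ↔ c < rodV L ρ 0 z := by
  refine ⟨fun hpos => ?_, fun hlt => ?_⟩
  · obtain ⟨a, ha, hlt⟩ := exists_between hpos
    exact ((h.lt_rodContourRadius_iff hc ha).1 hlt).trans (h.rodV_lt_of_lt (Or.inr hz) le_rfl ha)
  · obtain ⟨a, hlt, ha⟩ := (((h.continuousWithinAt_rodV_radial_zero hz).eventually
      (lt_mem_nhds hlt)).and self_mem_nhdsWithin).exists
    exact (mem_Ioi.1 ha).trans ((h.lt_rodContourRadius_iff hc ha).2 hlt)

theorem rodContourRadius_pos (h : IsCriticalRod L ρ) (hc : 0 < c) (hz : z ∈ Ioc 0 L) :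
    0 < rodContourRadius L ρ c z := by
  have hpath : Tendsto (fun r : ℝ => (r, z)) (𝓝[>] 0) (𝓝[rodExterior L] (0, z)) :=
    Tendsto.inf (by fun_prop : Continuous fun r : ℝ => (r, z)).continuousAt
      (tendsto_principal_principal.2 fun r hr => Or.inl hr.out.ne')
  obtain ⟨a, hlt, ha⟩ := ((((tendsto_rodV_atTop h.continuousOn h.pos hz).comp
    hpath).eventually_gt_atTop c).and self_mem_nhdsWithin).exists
  exact (mem_Ioi.1 ha).trans ((h.lt_rodContourRadius_iff hc ha).2 hlt)

end IsCriticalRod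

namespace IsCriticalRod

variable {L : ℝ} {ρ : ℝ → ℝ} {c z z₁ z₂ : ℝ}

theorem lt_rodV_axis_iff_of_nonpos (h : IsCriticalRod L ρ) (hz₁ : z₁ ≤ 0)
    (hV₁ : rodV L ρ 0 z₁ = min c (rodV L ρ 0 0)) (hz : z ≤ 0) : c < rodV L ρ 0 z ↔ z₁ < z := by
  have hmono := h.strictMonoOn_rodV_axis
  rw [← hmono.lt_iff_lt hz₁ hz, hV₁, min_lt_iff,
    or_iff_left (hmono.monotoneOn hz (mem_Iic.2 le_rfl) hz).not_gt]

theorem rodContourRadius_pos_iff_mem_Ioo (h : IsCriticalRod L ρ) (hc : 0 < c) (hz₁ : z₁ ≤ 0)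
    (hV₁ : rodV L ρ 0 z₁ = min c (rodV L ρ 0 0)) (hz₂ : L < z₂) (hV₂ : rodV L ρ 0 z₂ = c) :
    0 < rodContourRadius L ρ c z ↔ z ∈ Ioo z₁ z₂ := by
  have hL := h.length_pos
  rcases le_or_gt z 0 with hz | hz
  · rw [h.rodContourRadius_pos_iff hc (notMem_Ioc_of_le hz),
      h.lt_rodV_axis_iff_of_nonpos hz₁ hV₁ hz, mem_Ioo, and_iff_left (by linarith)]
  rcases le_or_gt z L with hzL | hzL
  · exact iff_of_true (h.rodContourRadius_pos hc ⟨hz, hzL⟩) ⟨by linarith, by linarith⟩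
  · rw [h.rodContourRadius_pos_iff hc (notMem_Ioc_of_gt hzL), ← hV₂,
      h.strictAntiOn_rodV_axis.lt_iff_gt hz₂ hzL, mem_Ioo, and_iff_right (by linarith)]

theorem rodContourRadius_eq_zero (h : IsCriticalRod L ρ) (hc : 0 < c) (hz₁ : z₁ ≤ 0)
    (hV₁ : rodV L ρ 0 z₁ = min c (rodV L ρ 0 0)) (hz₂ : L < z₂) (hV₂ : rodV L ρ 0 z₂ = c)
    (hz : z ∉ Ioo z₁ z₂) : rodContourRadius L ρ c z = 0 :=
  le_antisymm
    (not_lt.1 (mt (h.rodContourRadius_pos_iff_mem_Ioo hc hz₁ hV₁ hz₂ hV₂).1 hz))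
    (rodContourRadius_nonneg L ρ c z)

theorem eq_endpoint_of_axis_mem_rodContour (h : IsCriticalRod L ρ) (hz₁ : z₁ ≤ 0)
    (hV₁ : rodV L ρ 0 z₁ = min c (rodV L ρ 0 0)) (hz₂ : L < z₂) (hV₂ : rodV L ρ 0 z₂ = c)
    (hz : (0, z) ∈ rodContour L ρ c) : z = z₁ ∨ z = z₂ := by
  obtain ⟨-, hext, hV⟩ := hz
  rcases hext with habs | hneg | hgt
  · exact absurd habs (lt_irrefl _)
  · have hmono := h.strictMonoOn_rodV_axis
    have hlt : c < rodV L ρ 0 0 := hV ▸ hmono hneg.le (mem_Iic.2 le_rfl) hneg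
    rw [min_eq_left hlt.le, ← hV] at hV₁
    exact Or.inl (hmono.injOn hneg.le hz₁ hV₁.symm)
  · exact Or.inr (h.strictAntiOn_rodV_axis.injOn hgt hz₂ (hV.trans hV₂.symm))

theorem rodContour_union_endpoint (h : IsCriticalRod L ρ) (hc : 0 < c) (hz₁ : z₁ ≤ 0)
    (hV₁ : rodV L ρ 0 z₁ = min c (rodV L ρ 0 0)) (hz₂ : L < z₂) (hV₂ : rodV L ρ 0 z₂ = c) :
    rodContour L ρ c ∪ {(0, z₁)} = (fun z => (rodContourRadius L ρ c z, z)) '' Icc z₁ z₂ := by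
  have hz₁₂ : z₁ ≤ z₂ := by linarith [h.length_pos]
  have hpos {z : ℝ} := h.rodContourRadius_pos_iff_mem_Ioo (z := z) hc hz₁ hV₁ hz₂ hV₂
  have hzero {z : ℝ} := h.rodContourRadius_eq_zero (z := z) hc hz₁ hV₁ hz₂ hV₂
  have hzero₁ := hzero left_notMem_Ioo
  have hzero₂ := hzero right_notMem_Ioo
  refine Subset.antisymm (union_subset ?_ ?_) ?_
  · rintro ⟨r, z⟩ hrz
    rcases hrz.1.eq_or_lt with rfl | hr
    · rcases h.eq_endpoint_of_axis_mem_rodContour hz₁ hV₁ hz₂ hV₂ hrz with rfl | rfl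
      · exact ⟨z, left_mem_Icc.2 hz₁₂, Prod.ext hzero₁ rfl⟩
      · exact ⟨z, right_mem_Icc.2 hz₁₂, Prod.ext hzero₂ rfl⟩
    · have hradius := (h.rodContourRadius_eq_iff hc hr).2 hrz.2.2
      exact ⟨z, Ioo_subset_Icc_self (hpos.1 (hradius ▸ hr)), Prod.ext hradius rfl⟩
  · exact singleton_subset_iff.2 ⟨z₁, left_mem_Icc.2 hz₁₂, Prod.ext hzero₁ rfl⟩
  · rintro _ ⟨z, hz, rfl⟩
    rcases eq_endpoints_or_mem_Ioo_of_mem_Icc hz with rfl | rfl | hmem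
    · exact Or.inr (Prod.ext hzero₁ rfl)
    · exact Or.inl ⟨hzero₂.ge, Or.inr (Or.inr hz₂), (congrArg (rodV L ρ · _) hzero₂).trans hV₂⟩
    · exact Or.inl ⟨(hpos.2 hmem).le, Or.inl (hpos.2 hmem),
        h.rodV_rodContourRadius hc (hpos.2 hmem)⟩

theorem tendsto_rodContourRadius_div (h : IsCriticalRod L ρ) (hc : 0 < c)
    (hlt : rodV L ρ 0 0 < c) :
    Tendsto (fun z => rodContourRadius L ρ c z / z) (𝓝[>] 0) (𝓝 0) := by
  refine tendsto_order.2 ⟨fun b hb => ?_, fun ε hε => ?_⟩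
  · filter_upwards [self_mem_nhdsWithin] with z hz
    exact hb.trans_le (div_nonneg (rodContourRadius_nonneg L ρ c z) hz.out.le)
  · have hray : ContinuousWithinAt (fun z => rodV L ρ (ε * z) z) (Ioi 0) 0 := by
      have hcone : ContinuousWithinAt (fun p => rodV L ρ p.1 p.2) {p | ε * p.2 ≤ p.1}
          (ε * 0, 0) := by
        simpa only [mul_zero] using h.continuousWithinAt_rodV_tip hε
      exact hcone.comp (x := 0) (s := Ioi 0) (f := fun z => (ε * z, z)) (by fun_prop)
        fun z _ => (le_rfl : ε * z ≤ ε * z)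
    filter_upwards [hray.eventually (gt_mem_nhds (by simpa using hlt)), self_mem_nhdsWithin]
      with z hVz hz
    rw [div_lt_iff₀ hz]
    exact (h.rodContourRadius_lt_iff hc (mul_pos hε hz)).2 hVz

end IsCriticalRod

section LevelSurface

variable {L : ℝ} {ρ : ℝ → ℝ} {c : ℝ}

/-- The cylindrical coordinates `(r, z)` of a point of `ℝ³`, forgetting the angle. -/
noncomputable def cylindricalCoord (x : EuclideanSpace ℝ (Fin 3)) : ℝ × ℝ :=
  (√(x 0 ^ 2 + x 1 ^ 2), x 2)

theorem continuous_cylindricalCoord : Continuous cylindricalCoord := by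
  unfold cylindricalCoord
  fun_prop

theorem sqrt_sq_add_sq_eq_zero_iff {x y : ℝ} : √(x ^ 2 + y ^ 2) = 0 ↔ x = 0 ∧ y = 0 := by
  rw [Real.sqrt_eq_zero (by positivity), add_eq_zero_iff_of_nonneg (sq_nonneg x) (sq_nonneg y),
    sq_eq_zero_iff, sq_eq_zero_iff]

theorem cylindricalCoord_eq_zero_iff {x : EuclideanSpace ℝ (Fin 3)} :
    cylindricalCoord x = (0, 0) ↔ x = 0 := by
  rw [cylindricalCoord, Prod.mk.injEq, sqrt_sq_add_sq_eq_zero_iff, PiLp.ext_iff, and_assoc]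
  simp only [Fin.forall_fin_succ, Fin.forall_fin_zero, and_true, PiLp.zero_apply]
  rfl

theorem rodLevelSurface_eq_preimage :
    rodLevelSurface L ρ c = cylindricalCoord ⁻¹' rodContour L ρ c := by
  ext x
  have hr : 0 < √(x 0 ^ 2 + x 1 ^ 2) ↔ ¬(x 0 = 0 ∧ x 1 = 0) := by
    rw [← sqrt_sq_add_sq_eq_zero_iff, (Real.sqrt_nonneg _).lt_iff_ne']
  simp only [rodLevelSurface, rodCompl, rodContour, rodV3, cylindricalCoord, mem_preimage,
    mem_ofPred_eq, hr, Real.sqrt_nonneg, true_and, mem_Icc]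
  rw [← and_assoc, not_and_or, not_and_or (a := 0 ≤ x 2), not_le, not_le]

theorem closure_rodLevelSurface (hclosed : IsClosed (rodContour L ρ c ∪ {(0, 0)}))
    (htip : (0, 0) ∈ closure (rodContour L ρ c)) :
    closure (rodLevelSurface L ρ c) = rodLevelSurface L ρ c ∪ {0} := by
  have hpreimage : cylindricalCoord ⁻¹' (rodContour L ρ c ∪ {(0, 0)}) =
      rodLevelSurface L ρ c ∪ {0} := by
    ext x
    simp only [rodLevelSurface_eq_preimage, preimage_union, mem_union, mem_preimage,
      mem_singleton_iff, cylindricalCoord_eq_zero_iff]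
  refine Subset.antisymm ?_ (union_subset subset_closure (singleton_subset_iff.2 ?_))
  · rw [← hpreimage]
    refine closure_minimal ?_ (hclosed.preimage continuous_cylindricalCoord)
    rw [rodLevelSurface_eq_preimage]
    exact preimage_mono subset_union_left
  · let lift : ℝ × ℝ → EuclideanSpace ℝ (Fin 3) := fun p => !₂[p.1, 0, p.2]
    have hlift : Continuous lift := by fun_prop
    have hlift_maps : MapsTo lift (rodContour L ρ c) (rodLevelSurface L ρ c) := fun p hp => by
      rw [rodLevelSurface_eq_preimage, mem_preimage]
      convert hp
      simp [cylindricalCoord, lift, Real.sqrt_sq hp.1]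
    have hlift_zero : lift (0, 0) = 0 :=
      cylindricalCoord_eq_zero_iff.1 (by simp [cylindricalCoord, lift])
    exact hlift_zero ▸ map_mem_closure hlift htip hlift_maps

end LevelSurface

namespace IsCriticalRod

variable {L : ℝ} {ρ : ℝ → ℝ} {c : ℝ}

theorem closure_rodLevelSurface_of_lt (h : IsCriticalRod L ρ) (hlt : rodV L ρ 0 0 < c) :
    closure (rodLevelSurface L ρ c) = rodLevelSurface L ρ c ∪ {0} := by
  have hc := h.rodV_zero_pos.trans hlt
  obtain ⟨z₂, hz₂, hV₂⟩ := h.exists_gt_length_rodV_axis_eq hc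
  have hV₁ : rodV L ρ 0 0 = min c (rodV L ρ 0 0) := (min_eq_right hlt.le).symm
  have hgraph : Continuous fun z => (rodContourRadius L ρ c z, z) :=
    (h.continuous_rodContourRadius hc).prodMk continuous_id
  refine closure_rodLevelSurface ?_ ?_
  · rw [h.rodContour_union_endpoint hc le_rfl hV₁ hz₂ hV₂]
    exact (isCompact_Icc.image hgraph).isClosed
  · have htip : (rodContourRadius L ρ c 0, (0 : ℝ)) = (0, 0) := by
      rw [h.rodContourRadius_eq_zero hc le_rfl hV₁ hz₂ hV₂ left_notMem_Ioo]
    refine mem_closure_of_tendsto (f := fun z => (rodContourRadius L ρ c z, z)) (b := 𝓝[>] 0)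
      (htip ▸ hgraph.continuousAt.continuousWithinAt.tendsto) ?_
    filter_upwards [Ioo_mem_nhdsGT (h.length_pos.trans hz₂)] with z hz
    have hpos := (h.rodContourRadius_pos_iff_mem_Ioo hc le_rfl hV₁ hz₂ hV₂).2 hz
    exact ⟨hpos.le, Or.inl hpos, h.rodV_rodContourRadius hc hpos⟩

end IsCriticalRod

/-- For `c ∈ (0,∞)` the contour line `L_c` is nonempty and is the
graph of a continuous nonnegative function `r_c` on a compact interval `[z₁, z₂]` with
`[0,L] ⊆ [z₁,z₂)`, analytic and strictly positive on `(z₁,z₂)` and vanishing at the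
endpoints. If `c < V(0,0)` then `z₁ < 0` and `(0,z₁) ∈ L_c`; if `c > V(0,0)` then
`z₁ = 0` and the curve approaches `(0,0)` tangentially to the `z`-axis
(`r_c(z)/z → 0` as `z → 0+`), so that `closure Γ_c = Γ_c ∪ {0}`. -/
theorem statement12
    (L : ℝ) (hL : 0 < L) (ρ : ℝ → ℝ) (hρc : ContinuousOn ρ (Icc 0 L))
    (hρ0 : ρ 0 = 0) (hρpos : ∀ ζ ∈ Ioc 0 L, 0 < ρ ζ)
    (hcrit : IntervalIntegrable (fun ζ => ρ ζ / ζ) volume 0 L)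
    (c : ℝ) (hc : 0 < c) :
    (rodContour L ρ c).Nonempty ∧
    ∃ z₁ z₂ : ℝ, z₁ ≤ 0 ∧ L < z₂ ∧
      ∃ rc : ℝ → ℝ,
        ContinuousOn rc (Icc z₁ z₂) ∧ (∀ z ∈ Icc z₁ z₂, 0 ≤ rc z) ∧
        AnalyticOn ℝ rc (Ioo z₁ z₂) ∧ (∀ z ∈ Ioo z₁ z₂, 0 < rc z) ∧
        rc z₁ = 0 ∧ rc z₂ = 0 ∧
        rodContour L ρ c ∪ {((0 : ℝ), z₁)} = (fun z => (rc z, z)) '' Icc z₁ z₂ ∧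
        (c < rodV L ρ 0 0 → z₁ < 0 ∧ ((0 : ℝ), z₁) ∈ rodContour L ρ c) ∧
        (rodV L ρ 0 0 < c → z₁ = 0 ∧
          Tendsto (fun z => rc z / z) (𝓝[>] 0) (𝓝 0) ∧
          closure (rodLevelSurface L ρ c) = rodLevelSurface L ρ c ∪ {0}) := by
  have h : IsCriticalRod L ρ := ⟨hL, hρc, hρpos, hcrit⟩
  have hmono := h.strictMonoOn_rodV_axis
  obtain ⟨z₁, hz₁, hV₁⟩ := h.exists_le_zero_rodV_axis_eq (lt_min hc h.rodV_zero_pos)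
    (min_le_right c (rodV L ρ 0 0))
  obtain ⟨z₂, hz₂, hV₂⟩ := h.exists_gt_length_rodV_axis_eq hc
  have hpos {z : ℝ} := h.rodContourRadius_pos_iff_mem_Ioo (z := z) hc hz₁ hV₁ hz₂ hV₂
  have hzero {z : ℝ} := h.rodContourRadius_eq_zero (z := z) hc hz₁ hV₁ hz₂ hV₂
  refine ⟨⟨(0, z₂), le_rfl, Or.inr (Or.inr hz₂), hV₂⟩, z₁, z₂, hz₁, hz₂, rodContourRadius L ρ c,
    (h.continuous_rodContourRadius hc).continuousOn, fun z _ => rodContourRadius_nonneg L ρ c z,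
    fun z hz => (h.analyticAt_rodContourRadius hc (hpos.2 hz)).analyticWithinAt,
    fun z hz => hpos.2 hz, hzero left_notMem_Ioo, hzero right_notMem_Ioo,
    h.rodContour_union_endpoint hc hz₁ hV₁ hz₂ hV₂, fun hlt => ?_, fun hlt => ⟨?_,
    h.tendsto_rodContourRadius_div hc hlt, h.closure_rodLevelSurface_of_lt hlt⟩⟩
  · rw [min_eq_left hlt.le] at hV₁
    have hneg : z₁ < 0 := (hmono.lt_iff_lt hz₁ (mem_Iic.2 le_rfl)).1 (hV₁ ▸ hlt)
    exact ⟨hneg, le_rfl, Or.inr (Or.inl hneg), hV₁⟩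
  · rw [min_eq_right hlt.le] at hV₁
    exact hmono.injOn hz₁ (mem_Iic.2 le_rfl) hV₁
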